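/- Let an ORN design on N nodes guarantee throughput r and have maximum latency at most L, and let θ ≥ 2 be an integer with θ − 1 ≤ L/3 and 2·binom(L,θ−1) < N. Then r ≤ (N − 1 + 2·binom(L,θ−1)) / (2θ·(N − 2·binom(L,θ−1))). -/

import Mathlib

/-!
The bound is a weak-duality argument. Put `k = θ - 1` and `B = L.choose k`. Call a physical edge `e`
*early* for the source `(a, t)` if it can be entered from `(a, t)` after at most `k` hops, and *late*
for the destination `b` if `b` can be reached after traversing `e` with at most `k` further hops
(all within latency `L`).

* A path of latency at most `L` with at least `θ` hops traverses `θ` early edges (its first `θ` hops)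
  and `θ` late edges (its last `θ` hops), see `path_weight`. At most
  `∑ i ≤ k, L.choose i ≤ 2 B` destinations are reachable from `(a, t)` with fewer than `θ` hops, so
  at least `N - 2 B` destinations `b` force every routing path from `(a, t)` to have weight `2 θ`.
* For a fixed edge `e`, the demand `D t a b = c * ([e early for (a, t)] + [e late for b])` has row and
  column sums at most `c * (N + (2 B - 1))`, since at most `2 B - 1` sources (destinations) are early
  (late) for `e`. With `c = r / (N - 1 + 2 B)` it requests throughput `r`, so it places at
  most one unit of flow on `e`.

Summing the second point over all edges in the timeslots `[0, M + L)` and comparing with the first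
point for the sources in the timeslots `[0, M)` gives
`2 θ c N (N - 2 B) M ≤ N (M + L)`; letting `M → ∞` yields the theorem.
-/

open scoped ENNReal

/-- A connection schedule of size `N` and period `T`: a `T`-periodic sequence of
permutations of `[N]`, indexed by timeslots `t : ℤ`. -/
structure ConnSched (N T : ℕ) where
  Tpos : 0 < T
  perm : ℤ → Equiv.Perm (Fin N)
  periodic : ∀ t : ℤ, perm (t + T) = perm t

/-- A path in the virtual topology, encoded by its starting vertex together with the
list of its steps, where `true` denotes traversing the (unique) outgoing physical edge
and `false` denotes traversing the virtual edge. -/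
structure ORNPath (N : ℕ) where
  start : Fin N × ℤ
  steps : List Bool

namespace ORNPath

variable {N T : ℕ}

/-- One step in the virtual topology: from vertex `v`, either follow the physical edge
(`b = true`) to `(π_t v.1, v.2 + 1)`, or the virtual edge (`b = false`) to `(v.1, v.2+1)`. -/
def stepFn (S : ConnSched N T) (v : Fin N × ℤ) (b : Bool) : Fin N × ℤ :=
  (if b then S.perm v.2 v.1 else v.1, v.2 + 1)

/-- The final vertex of a path. -/
def dest (S : ConnSched N T) (P : ORNPath N) : Fin N × ℤ :=
  P.steps.foldl (stepFn S) P.start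

/-- The latency of a path: the total number of (virtual or physical) edges it contains. -/
def latency (P : ORNPath N) : ℕ := P.steps.length

/-- The number of physical edges of a path. -/
def hops (P : ORNPath N) : ℕ := P.steps.count true

/-- The vertex of a path after `k` steps. -/
def vertexAt (S : ConnSched N T) (P : ORNPath N) (k : ℕ) : Fin N × ℤ :=
  (P.steps.take k).foldl (stepFn S) P.start

/-- A physical edge of the virtual topology is identified by the pair
(sending node, timeslot); the receiving node is determined by the schedule.
`P.usesEdge S e` says that path `P` traverses the physical edge `e`. -/
def usesEdge (S : ConnSched N T) (P : ORNPath N) (e : Fin N × ℤ) : Prop :=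
  ∃ k : Fin P.steps.length, P.steps.get k = true ∧ P.vertexAt S k.val = e

/-- Transpose a path by `s` timeslots. -/
def shift (P : ORNPath N) (s : ℤ) : ORNPath N :=
  ⟨(P.start.1, P.start.2 + s), P.steps⟩

end ORNPath

/-- The amount of flow that `f` sends across the physical edge `e`. -/
noncomputable def edgeFlow {N T : ℕ} (S : ConnSched N T) (f : ORNPath N → ℝ≥0∞)
    (e : Fin N × ℤ) : ℝ≥0∞ :=
  ∑' P : {P : ORNPath N // P.usesEdge S e}, f P.val

/-- A flow is feasible if it places at most one unit of flow on every physical edge. -/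
def Feasible {N T : ℕ} (S : ConnSched N T) (f : ORNPath N → ℝ≥0∞) : Prop :=
  ∀ e : Fin N × ℤ, edgeFlow S f e ≤ 1

/-- An ORN design: a connection schedule together with an oblivious routing scheme.
`route a b t` is a unit flow supported on paths from `(a,t)` to the timeline of `b`,
periodic with period `T`. -/
structure ORNDesign (N T : ℕ) where
  sched : ConnSched N T
  route : Fin N → Fin N → ℤ → ORNPath N → ℝ≥0∞
  route_support : ∀ a b t P, route a b t P ≠ 0 →
    P.start = (a, t) ∧ (P.dest sched).1 = b
  route_unit : ∀ a b t, ∑' P : ORNPath N, route a b t P = 1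
  route_periodic : ∀ a b t P, route a b (t + T) (P.shift T) = route a b t P

/-- A demand function `D` (assigning to each timeslot an `N × N` matrix of nonnegative
reals) requests throughput `r` if all row and column sums of every `D t` are at most `r`. -/
def RequestsThroughput {N : ℕ} (D : ℤ → Fin N → Fin N → ℝ) (r : ℝ) : Prop :=
  (∀ t a b, 0 ≤ D t a b) ∧ (∀ t a, ∑ b, D t a b ≤ r) ∧ (∀ t b, ∑ a, D t a b ≤ r)

/-- The flow induced by routing the demand `D` with the routing scheme of `R`. -/
noncomputable def inducedFlow {N T : ℕ} (R : ORNDesign N T)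
    (D : ℤ → Fin N → Fin N → ℝ) (P : ORNPath N) : ℝ≥0∞ :=
  ∑' x : Fin N × Fin N × ℤ,
    ENNReal.ofReal (D x.2.2 x.1 x.2.1) * R.route x.1 x.2.1 x.2.2 P

/-- An ORN design guarantees throughput `r` if the induced flow is feasible for every
demand function requesting throughput at most `r`. -/
def GuaranteesThroughput {N T : ℕ} (R : ORNDesign N T) (r : ℝ) : Prop :=
  ∀ D : ℤ → Fin N → Fin N → ℝ, RequestsThroughput D r →
    Feasible R.sched (inducedFlow R D)

/-- The maximum latency of the ORN design `R` is at most `L`: every path carrying a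
positive amount of flow has latency at most `L`. -/
def MaxLatencyLE {N T : ℕ} (R : ORNDesign N T) (L : ℕ) : Prop :=
  ∀ a b t P, R.route a b t P ≠ 0 → P.latency ≤ L

open ORNPath

namespace ORNBound

variable {N T : ℕ}

/-! ### Counting step sequences -/

theorem sum_choose_le (L k : ℕ) (h : 3 * k ≤ L) :
    ∑ i ∈ Finset.range (k + 1), L.choose i ≤ 2 * L.choose k := by
  induction k with
  | zero => simp
  | succ k ih =>
    rw [Finset.sum_range_succ]
    have h1 := ih (by omega)
    have h2 := Nat.choose_succ_right_eq L k
    -- consecutive binomial coefficients at least double below `L / 3`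
    have h3 : 2 * L.choose k ≤ L.choose (k + 1) := by
      have : 2 * (k + 1) ≤ L - k := by omega
      have h4 : L.choose k * (2 * (k + 1)) ≤ L.choose (k + 1) * (k + 1) := by
        rw [h2]; exact Nat.mul_le_mul_left _ this
      nlinarith
    omega

theorem sum_choose_pred_lt (L k : ℕ) (hk : 1 ≤ k) (hL : 1 ≤ L) :
    ∑ i ∈ Finset.range (k + 1), (L - 1).choose i < ∑ i ∈ Finset.range (k + 1), L.choose i := by
  apply Finset.sum_lt_sum
  · intro i _
    exact Nat.choose_le_choose i (by omega)
  · exact ⟨1, by simp; omega, by simp; omega⟩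

theorem exists_lists (n k : ℕ) : ∃ F : Finset (List Bool),
    (∀ l : List Bool, l.length = n → l.count true ≤ k → l ∈ F) ∧
    F.card ≤ ∑ i ∈ Finset.range (k + 1), n.choose i := by
  induction n generalizing k with
  | zero =>
    refine ⟨{[]}, ?_, ?_⟩
    · intro l hl _
      simpa using hl
    · rw [Finset.sum_range_succ']
      simp
  | succ n ih =>
    obtain ⟨F, hF, hFc⟩ := ih k
    rcases k with _ | k
    · refine ⟨F.image (List.cons false), ?_, ?_⟩
      · intro l hl hc
        rcases l with _ | ⟨x, l⟩
        · simp at hl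
        · rcases x with _ | _
          · exact Finset.mem_image_of_mem _ (hF l (by simpa using hl) (by simpa using hc))
          · simp at hc
      · refine Finset.card_image_le.trans (hFc.trans ?_)
        simp
    · obtain ⟨G, hG, hGc⟩ := ih k
      refine ⟨F.image (List.cons false) ∪ G.image (List.cons true), ?_, ?_⟩
      · intro l hl hc
        rcases l with _ | ⟨x, l⟩
        · simp at hl
        · rcases x with _ | _
          · exact Finset.mem_union_left _
              (Finset.mem_image_of_mem _ (hF l (by simpa using hl) (by simpa using hc)))
          · exact Finset.mem_union_right _
              (Finset.mem_image_of_mem _ (hG l (by simpa using hl) (by simpa using hc)))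
      · refine (Finset.card_union_le _ _).trans
          ((Nat.add_le_add Finset.card_image_le Finset.card_image_le).trans
            ((Nat.add_le_add hFc hGc).trans ?_))
        rw [Finset.sum_range_succ' _ (k + 1), Finset.sum_range_succ' _ (k + 1)]
        simp only [Nat.choose_succ_succ', Finset.sum_add_distrib, Nat.choose_zero_right]
        omega

/-- A set of nodes each member of which is witnessed by a step sequence of length `n` with at most
`k` hops, no sequence witnessing two nodes, has at most `∑ i ≤ k, n.choose i` elements. -/
theorem card_le_of_witness (n k : ℕ) (A : Finset (Fin N)) (Q : Fin N → List Bool → Prop)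
    (hQ : ∀ a ∈ A, ∃ l, l.length = n ∧ l.count true ≤ k ∧ Q a l)
    (hinj : ∀ a b l, Q a l → Q b l → a = b) :
    A.card ≤ ∑ i ∈ Finset.range (k + 1), n.choose i := by
  obtain ⟨F, hF, hFc⟩ := exists_lists n k
  refine le_trans ?_ hFc
  choose! f hf using hQ
  apply Finset.card_le_card_of_injOn f
  · intro a ha
    exact hF _ (hf a ha).1 (hf a ha).2.1
  · intro a ha b hb hab
    exact hinj a b _ (hf a ha).2.2 (hab ▸ (hf b hb).2.2)

/-! ### Walks in the virtual topology -/

theorem foldl_snd (S : ConnSched N T) (l : List Bool) (v : Fin N × ℤ) :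
    (l.foldl (stepFn S) v).2 = v.2 + l.length := by
  induction l generalizing v with
  | nil => simp
  | cons x l ih => simp [ih, stepFn]; ring

theorem foldl_pad (S : ConnSched N T) (m : ℕ) (v : Fin N × ℤ) :
    ((List.replicate m false).foldl (stepFn S) v).1 = v.1 := by
  induction m generalizing v with
  | zero => simp
  | succ m ih => simp [List.replicate_succ, ih, stepFn]

theorem foldl_inj (S : ConnSched N T) (l : List Bool) (a b : Fin N) (t : ℤ)
    (h : l.foldl (stepFn S) (a, t) = l.foldl (stepFn S) (b, t)) : a = b := by
  induction l generalizing a b t with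
  | nil => simpa using h
  | cons x l ih =>
    have := ih _ _ _ h
    rcases x with _ | _ <;> simpa using this

/-- The physical edge `e` can be entered from `(a, t)` after at most `k` hops,
within total latency `L` (the edge `e` included). -/
def Early (S : ConnSched N T) (L k : ℕ) (a : Fin N) (t : ℤ) (e : Fin N × ℤ) : Prop :=
  ∃ l : List Bool, l.length + 1 ≤ L ∧ l.count true ≤ k ∧ l.foldl (stepFn S) (a, t) = e

/-- The timeline of `b` can be reached after traversing the physical edge `e` with at most `k`
further hops in `L - 1` steps. The length is fixed, as virtual steps can be appended freely. -/
def Late (S : ConnSched N T) (L k : ℕ) (b : Fin N) (e : Fin N × ℤ) : Prop :=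
  ∃ l : List Bool, l.length = L - 1 ∧ l.count true ≤ k ∧
    (l.foldl (stepFn S) (stepFn S e true)).1 = b

/-- The timeline of `b` can be reached from `(a, t)` with at most `k` hops in `L` steps. -/
def Near (S : ConnSched N T) (L k : ℕ) (a : Fin N) (t : ℤ) (b : Fin N) : Prop :=
  ∃ l : List Bool, l.length = L ∧ l.count true ≤ k ∧ (l.foldl (stepFn S) (a, t)).1 = b

theorem pad (S : ConnSched N T) (n k : ℕ) (v : Fin N × ℤ) (l : List Bool) (hl : l.length ≤ n)
    (hc : l.count true ≤ k) : ∃ l' : List Bool, l'.length = n ∧ l'.count true ≤ k ∧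
      (l'.foldl (stepFn S) v).1 = (l.foldl (stepFn S) v).1 := by
  refine ⟨l ++ List.replicate (n - l.length) false, ?_, ?_, ?_⟩
  · simp; omega
  · simpa [List.count_replicate] using hc
  · rw [List.foldl_append, foldl_pad]

open Classical in
theorem card_early (S : ConnSched N T) (L k : ℕ) (t : ℤ) (e : Fin N × ℤ) :
    (Finset.univ.filter fun a => Early S L k a t e).card ≤
      ∑ i ∈ Finset.range (k + 1), (L - 1).choose i := by
  -- every witness has length `e.2 - t`, so the padded list determines the original one
  apply card_le_of_witness (L - 1) k _ (fun a l =>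
    (e.2 - t).toNat ≤ L - 1 ∧ (l.take (e.2 - t).toNat).foldl (stepFn S) (a, t) = e)
  · intro a ha
    obtain ⟨l, hl, hc, he⟩ := (Finset.mem_filter.1 ha).2
    have hlen : (e.2 - t).toNat = l.length := by
      have := foldl_snd S l (a, t)
      rw [he] at this
      simp at this
      omega
    refine ⟨l ++ List.replicate (L - 1 - l.length) false, ?_, ?_, ?_, ?_⟩
    · simp; omega
    · simpa [List.count_replicate] using hc
    · omega
    · rw [hlen]; simpa using he
  · rintro a b l ⟨_, h1⟩ ⟨_, h2⟩
    exact foldl_inj S _ a b t (h1.trans h2.symm)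

open Classical in
theorem card_late (S : ConnSched N T) (L k : ℕ) (e : Fin N × ℤ) :
    (Finset.univ.filter fun b => Late S L k b e).card ≤
      ∑ i ∈ Finset.range (k + 1), (L - 1).choose i := by
  apply card_le_of_witness (L - 1) k _
    (fun b l => (l.foldl (stepFn S) (stepFn S e true)).1 = b)
  · intro b hb
    exact (Finset.mem_filter.1 hb).2
  · rintro a b l h1 h2
    exact h1.symm.trans h2

open Classical in
theorem card_near (S : ConnSched N T) (L k : ℕ) (a : Fin N) (t : ℤ) :
    (Finset.univ.filter fun b => Near S L k a t b).card ≤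
      ∑ i ∈ Finset.range (k + 1), L.choose i := by
  apply card_le_of_witness L k _ (fun b l => (l.foldl (stepFn S) (a, t)).1 = b)
  · intro b hb
    exact (Finset.mem_filter.1 hb).2
  · rintro a b l h1 h2
    exact h1.symm.trans h2

/-! ### The weight of a path -/

/-- The positions of the first `m` hops of a step sequence. -/
theorem exists_first (l : List Bool) (m : ℕ) (h : m ≤ l.count true) :
    ∃ J : Finset ℕ, J.card = m ∧ ∀ j ∈ J, l[j]? = some true ∧ (l.take j).count true < m := by
  induction l generalizing m with
  | nil => exact ⟨∅, by simpa [eq_comm] using h, by simp⟩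
  | cons x l ih =>
    rcases x with _ | _
    · obtain ⟨J, hJ, hj⟩ := ih m (by simpa using h)
      refine ⟨J.map ⟨Nat.succ, Nat.succ_injective⟩, by simpa using hJ, ?_⟩
      intro j hjm
      obtain ⟨i, hi, rfl⟩ := Finset.mem_map.1 hjm
      simpa using hj i hi
    · rcases m with _ | m
      · exact ⟨∅, by simp, by simp⟩
      obtain ⟨J, hJ, hj⟩ := ih m (by simpa using h)
      refine ⟨insert 0 (J.map ⟨Nat.succ, Nat.succ_injective⟩), ?_, ?_⟩
      · rw [Finset.card_insert_of_notMem (by simp)]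
        simpa using hJ
      · intro j hjm
        rcases Finset.mem_insert.1 hjm with rfl | hjm
        · simp
        obtain ⟨i, hi, rfl⟩ := Finset.mem_map.1 hjm
        simpa using hj i hi

/-- The positions of the last `m` hops of a step sequence. -/
theorem exists_last (l : List Bool) (m : ℕ) (h : m ≤ l.count true) :
    ∃ J : Finset ℕ, J.card = m ∧
      ∀ j ∈ J, l[j]? = some true ∧ (l.drop (j + 1)).count true < m := by
  induction l generalizing m with
  | nil => exact ⟨∅, by simpa [eq_comm] using h, by simp⟩
  | cons x l ih =>
    by_cases hm : m ≤ l.count true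
    · obtain ⟨J, hJ, hj⟩ := ih m hm
      refine ⟨J.map ⟨Nat.succ, Nat.succ_injective⟩, by simpa using hJ, ?_⟩
      intro j hjm
      obtain ⟨i, hi, rfl⟩ := Finset.mem_map.1 hjm
      simpa using hj i hi
    · -- all hops of the list are among its last `m` hops, the head included
      have hx : x = true := by
        rcases x with _ | _
        · simp at h; omega
        · rfl
      subst hx
      have hc : m = l.count true + 1 := by simp at h; omega
      obtain ⟨J, hJ, hj⟩ := ih (l.count true) le_rfl
      refine ⟨insert 0 (J.map ⟨Nat.succ, Nat.succ_injective⟩), ?_, ?_⟩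
      · rw [Finset.card_insert_of_notMem (by simp)]
        simp [hJ, hc]
      · intro j hjm
        rcases Finset.mem_insert.1 hjm with rfl | hjm
        · simp [hc]
        obtain ⟨i, hi, rfl⟩ := Finset.mem_map.1 hjm
        have := hj i hi
        refine ⟨by simpa using this.1, ?_⟩
        have h2 := this.2
        simp
        omega

theorem vertexAt_snd (S : ConnSched N T) (P : ORNPath N) (j : ℕ) (hj : j ≤ P.steps.length) :
    (P.vertexAt S j).2 = P.start.2 + j := by
  rw [vertexAt, foldl_snd, List.length_take, min_eq_left hj]

/-- The physical edges of a set of hop positions of `P` are as many distinct edges. -/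
theorem card_image_vertexAt (S : ConnSched N T) (P : ORNPath N) (J : Finset ℕ)
    (hJ : ∀ j ∈ J, P.steps[j]? = some true) :
    (J.image (P.vertexAt S)).card = J.card := by
  have hlt : ∀ j ∈ J, j < P.steps.length := fun j hj =>
    (List.getElem?_eq_some_iff.1 (hJ j hj)).1
  apply Finset.card_image_of_injOn
  intro i hi j hj hij
  have h1 := vertexAt_snd S P i (hlt i hi).le
  have h2 := vertexAt_snd S P j (hlt j hj).le
  rw [hij] at h1
  omega

theorem late_of_drop (S : ConnSched N T) (P : ORNPath N) (L k j : ℕ)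
    (hL : P.latency ≤ L) (hj : P.steps[j]? = some true)
    (hc : (P.steps.drop (j + 1)).count true ≤ k) :
    Late S L k (P.dest S).1 (P.vertexAt S j) := by
  obtain ⟨hlt, hjt⟩ := List.getElem?_eq_some_iff.1 hj
  rw [latency] at hL
  obtain ⟨l', h1, h2, h3⟩ := pad S (L - 1) k (stepFn S (P.vertexAt S j) true)
    (P.steps.drop (j + 1)) (by rw [List.length_drop]; omega) hc
  refine ⟨l', h1, h2, ?_⟩
  rw [h3, dest]
  conv_rhs => rw [← List.take_append_drop j P.steps, List.foldl_append,
    List.drop_eq_getElem_cons hlt, hjt, List.foldl_cons]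
  rfl

open Classical in
/-- A path from `(a, t)` to `b` with more than `k` hops traverses at least `k + 1` early and at least
`k + 1` late edges. -/
theorem path_weight (S : ConnSched N T) (P : ORNPath N) (L k : ℕ) (a b : Fin N) (t : ℤ)
    (W : Finset (Fin N × ℤ)) (hstart : P.start = (a, t)) (hdest : (P.dest S).1 = b)
    (hL : P.latency ≤ L) (hk : k + 1 ≤ P.steps.count true)
    (hW : ∀ e : Fin N × ℤ, t ≤ e.2 → e.2 < t + L → e ∈ W) :
    (2 * (k + 1 : ℕ) : ℝ≥0∞) ≤ ∑ e ∈ W, if P.usesEdge S e then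
      ((if Early S L k a t e then 1 else 0) + (if Late S L k b e then 1 else 0) : ℝ≥0∞)
      else 0 := by
  have hLs : P.steps.length ≤ L := hL
  have key : ∀ (J : Finset ℕ) (Q : Fin N × ℤ → Prop), J.card = k + 1 →
      (∀ j ∈ J, P.steps[j]? = some true ∧ Q (P.vertexAt S j)) →
      ((k + 1 : ℕ) : ℝ≥0∞) ≤ ∑ e ∈ W, if P.usesEdge S e ∧ Q e then (1 : ℝ≥0∞) else 0 := by
    intro J Q hJ hQ
    rw [← Finset.sum_filter, Finset.sum_const, nsmul_one, ← hJ,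
      ← card_image_vertexAt S P J (fun j hj => (hQ j hj).1)]
    refine Nat.cast_le.2 (Finset.card_le_card ?_)
    intro e he
    obtain ⟨j, hj, rfl⟩ := Finset.mem_image.1 he
    obtain ⟨hlt, hjt⟩ := List.getElem?_eq_some_iff.1 (hQ j hj).1
    have h2 := vertexAt_snd S P j hlt.le
    rw [hstart] at h2
    refine Finset.mem_filter.2 ⟨hW _ (by simp at h2; omega) (by simp at h2; omega), ?_, (hQ j hj).2⟩
    exact ⟨⟨j, hlt⟩, by simpa using hjt, rfl⟩
  obtain ⟨J, hJ, hj⟩ := exists_first P.steps (k + 1) hk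
  obtain ⟨J', hJ', hj'⟩ := exists_last P.steps (k + 1) hk
  have h1 := key J (Early S L k a t) hJ (by
    intro j hjm
    obtain ⟨hlt, _⟩ := List.getElem?_eq_some_iff.1 (hj j hjm).1
    refine ⟨(hj j hjm).1, P.steps.take j, ?_, Nat.lt_succ_iff.1 (hj j hjm).2, ?_⟩
    · rw [List.length_take]; omega
    · rw [← hstart]; rfl)
  have h2 := key J' (Late S L k b) hJ' (by
    intro j hjm
    refine ⟨(hj' j hjm).1, ?_⟩
    rw [← hdest]
    exact late_of_drop S P L k j hL (hj' j hjm).1 (Nat.lt_succ_iff.1 (hj' j hjm).2))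
  rw [two_mul]
  refine (add_le_add h1 h2).trans ?_
  rw [← Finset.sum_add_distrib]
  refine Finset.sum_le_sum fun e _ => ?_
  by_cases hu : P.usesEdge S e <;> simp [hu]

/-! ### The adversarial demands and the averaging argument -/

open Classical in
/-- The demand concentrated on the sources for which `e` is early and on the destinations for which
`e` is late. -/
noncomputable def dem (S : ConnSched N T) (L k : ℕ) (c : ℝ) (e : Fin N × ℤ) :
    ℤ → Fin N → Fin N → ℝ := fun t a b =>
  c * ((if Early S L k a t e then 1 else 0) + (if Late S L k b e then 1 else 0))

theorem dem_requests (S : ConnSched N T) (L k : ℕ) (c : ℝ) (hc : 0 ≤ c) (e : Fin N × ℤ) (X : ℕ)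
    (hX : ∑ i ∈ Finset.range (k + 1), (L - 1).choose i ≤ X) :
    RequestsThroughput (dem S L k c e) (c * (N + X)) := by
  classical
  refine ⟨?_, ?_, ?_⟩
  · intro t a b
    unfold dem
    positivity
  · intro t a
    have h : ((Finset.univ.filter fun b => Late S L k b e).card : ℝ) ≤ X := by
      exact_mod_cast (card_late S L k e).trans hX
    simp only [dem, ← Finset.mul_sum]
    refine mul_le_mul_of_nonneg_left ?_ hc
    rw [Finset.sum_add_distrib, Finset.sum_const, Finset.sum_boole, Finset.card_univ,
      Fintype.card_fin, nsmul_eq_mul]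
    refine add_le_add ?_ h
    split_ifs <;> simp
  · intro t b
    have h : ((Finset.univ.filter fun a => Early S L k a t e).card : ℝ) ≤ X := by
      exact_mod_cast (card_early S L k t e).trans hX
    simp only [dem, ← Finset.mul_sum]
    refine mul_le_mul_of_nonneg_left ?_ hc
    rw [Finset.sum_add_distrib, Finset.sum_boole, Finset.sum_const, Finset.card_univ,
      Fintype.card_fin, nsmul_eq_mul, add_comm]
    refine add_le_add ?_ h
    split_ifs <;> simp

open Classical in
/-- Flow from `(a, t)` to a destination that is not near has weight at least `2 (k + 1)`. -/
theorem far_weight (R : ORNDesign N T) (L k : ℕ) (hL : MaxLatencyLE R L) (c : ℝ) (hc : 0 ≤ c)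
    (a b : Fin N) (t : ℤ) (W : Finset (Fin N × ℤ)) (hfar : ¬ Near R.sched L k a t b)
    (hW : ∀ e : Fin N × ℤ, t ≤ e.2 → e.2 < t + L → e ∈ W) :
    ENNReal.ofReal c * (2 * (k + 1 : ℕ)) ≤ ∑' P : ORNPath N, R.route a b t P *
      ∑ e ∈ W, if P.usesEdge R.sched e then
        ENNReal.ofReal (dem R.sched L k c e t a b) else 0 := by
  calc ENNReal.ofReal c * (2 * (k + 1 : ℕ))
      = ∑' P : ORNPath N, R.route a b t P * (ENNReal.ofReal c * (2 * (k + 1 : ℕ))) := by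
        rw [ENNReal.tsum_mul_right, R.route_unit, one_mul]
    _ ≤ _ := by
        refine ENNReal.tsum_le_tsum fun P => ?_
        by_cases hP : R.route a b t P = 0
        · simp [hP]
        obtain ⟨hs, hd⟩ := R.route_support a b t P hP
        have hlat := hL a b t P hP
        have hcount : k + 1 ≤ P.steps.count true := by
          by_contra hcon
          obtain ⟨l', h1, h2, h3⟩ := pad R.sched L k (a, t) P.steps hlat (by omega)
          exact hfar ⟨l', h1, h2, by rw [h3, ← hd, dest, hs]⟩
        refine mul_le_mul_right ?_ _
        refine (mul_le_mul_right
          (path_weight R.sched P L k a b t W hs hd hlat hcount hW) _).trans ?_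
        rw [Finset.mul_sum]
        refine Finset.sum_le_sum fun e _ => ?_
        by_cases hu : P.usesEdge R.sched e
        · simp only [hu, if_true, dem]
          rw [ENNReal.ofReal_mul hc]
          refine mul_le_mul_right ?_ _
          split_ifs <;> simp [one_add_one_eq_two]
        · simp [hu]

open Classical in
/-- Exchanging the order of summation in the total flow over a finite set of edges, where each edge
`e` has its own demand `D e`. -/
theorem sum_edgeFlow (R : ORNDesign N T) (D : Fin N × ℤ → ℤ → Fin N → Fin N → ℝ)
    (W : Finset (Fin N × ℤ)) :
    ∑ e ∈ W, edgeFlow R.sched (inducedFlow R (D e)) e =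
      ∑' x : Fin N × Fin N × ℤ, ∑' P : ORNPath N, R.route x.1 x.2.1 x.2.2 P *
        ∑ e ∈ W, if P.usesEdge R.sched e then
          ENNReal.ofReal (D e x.2.2 x.1 x.2.1) else 0 := by
  have h : ∀ e, edgeFlow R.sched (inducedFlow R (D e)) e =
      ∑' x : Fin N × Fin N × ℤ, ∑' P : ORNPath N, R.route x.1 x.2.1 x.2.2 P *
        if P.usesEdge R.sched e then ENNReal.ofReal (D e x.2.2 x.1 x.2.1) else 0 := by
    intro e
    rw [ENNReal.tsum_comm, edgeFlow]
    refine (tsum_subtype {P : ORNPath N | P.usesEdge R.sched e}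
      (inducedFlow R (D e))).trans ?_
    refine tsum_congr fun P => ?_
    by_cases hu : P.usesEdge R.sched e
    · simp [Set.indicator, hu, inducedFlow, mul_comm]
    · simp [Set.indicator, hu]
  simp only [h, Finset.mul_sum]
  rw [← Summable.tsum_finsetSum (fun _ _ => ENNReal.summable)]
  refine tsum_congr fun x => ?_
  rw [← Summable.tsum_finsetSum (fun _ _ => ENNReal.summable)]

/-- The counting inequality obtained from the sources in the timeslots `[0, M)` and the edges in the
timeslots `[0, M + L)`. -/
theorem window_bound (R : ORNDesign N T) (r : ℝ) (hr : GuaranteesThroughput R r) (L k : ℕ)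
    (hL : MaxLatencyLE R L) (c : ℝ) (hc : 0 ≤ c) (X Y : ℕ)
    (hX : ∑ i ∈ Finset.range (k + 1), (L - 1).choose i ≤ X)
    (hY : ∑ i ∈ Finset.range (k + 1), L.choose i ≤ Y)
    (hYN : Y ≤ N) (hcr : c * (N + X) = r) (M : ℕ) :
    (N : ℝ) * M * ((N - Y) * (c * (2 * (k + 1)))) ≤ N * (M + L) := by
  classical
  set W : Finset (Fin N × ℤ) := Finset.univ ×ˢ Finset.Ico (0 : ℤ) (M + L : ℕ) with hWdef
  set U : Finset (Fin N × Fin N × ℤ) :=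
    Finset.univ ×ˢ (Finset.univ ×ˢ Finset.Ico (0 : ℤ) (M : ℕ)) with hUdef
  have hup : ∑ e ∈ W, edgeFlow R.sched (inducedFlow R (dem R.sched L k c e)) e ≤
      ((N * (M + L) : ℕ) : ℝ≥0∞) := by
    refine (Finset.sum_le_card_nsmul W _ 1 fun e _ =>
      hr _ (hcr ▸ dem_requests R.sched L k c hc e X hX) e).trans ?_
    rw [hWdef, Finset.card_product, Finset.card_univ, Fintype.card_fin, Int.card_Ico, sub_zero,
      Int.toNat_natCast, nsmul_one]
  rw [sum_edgeFlow] at hup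
  have hlow : ((N * M * (N - Y) : ℕ) : ℝ≥0∞) * (ENNReal.ofReal c * (2 * (k + 1 : ℕ))) ≤
      ((N * (M + L) : ℕ) : ℝ≥0∞) := by
    refine le_trans ?_ ((ENNReal.sum_le_tsum U).trans hup)
    set V := U.filter fun x => ¬ Near R.sched L k x.1 x.2.2 x.2.1 with hV
    have hVc : N * M * (N - Y) ≤ V.card := by
      have h1 : V.card = ∑ p ∈ (Finset.univ : Finset (Fin N)) ×ˢ Finset.Ico (0 : ℤ) (M : ℕ),
          (Finset.univ.filter fun b => ¬ Near R.sched L k p.1 p.2 b).card := by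
        rw [hV, hUdef, Finset.card_filter, Finset.sum_product, Finset.sum_product]
        refine Finset.sum_congr rfl fun a _ => ?_
        rw [Finset.sum_product, Finset.sum_comm]
        refine Finset.sum_congr rfl fun t _ => ?_
        rw [Finset.card_filter]
      rw [h1]
      have h2 := Finset.card_nsmul_le_sum
        ((Finset.univ : Finset (Fin N)) ×ˢ Finset.Ico (0 : ℤ) (M : ℕ))
        (fun p => (Finset.univ.filter fun b => ¬ Near R.sched L k p.1 p.2 b).card) (N - Y) (by
          intro p _
          have h3 := card_near R.sched L k p.1 p.2
          have h4 := Finset.card_filter_add_card_filter_not (s := (Finset.univ : Finset (Fin N)))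
            (fun b => Near R.sched L k p.1 p.2 b)
          rw [Finset.card_univ, Fintype.card_fin] at h4
          omega)
      simpa using h2
    calc ((N * M * (N - Y) : ℕ) : ℝ≥0∞) * (ENNReal.ofReal c * (2 * (k + 1 : ℕ)))
        ≤ (V.card : ℝ≥0∞) * (ENNReal.ofReal c * (2 * (k + 1 : ℕ))) :=
          mul_le_mul_left (Nat.cast_le.2 hVc) _
      _ = V.card • (ENNReal.ofReal c * (2 * (k + 1 : ℕ))) := by rw [nsmul_eq_mul]
      _ ≤ _ := Finset.card_nsmul_le_sum V _ _ (by
          intro x hx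
          obtain ⟨hxU, hxN⟩ := Finset.mem_filter.1 hx
          refine far_weight R L k hL c hc x.1 x.2.1 x.2.2 W hxN ?_
          intro e h1 h2
          simp [hUdef] at hxU
          simp [hWdef]
          omega)
      _ ≤ _ := Finset.sum_le_sum_of_subset (Finset.filter_subset _ _)
  have h5 := ENNReal.toReal_mono (ENNReal.natCast_ne_top _) hlow
  simp only [ENNReal.toReal_mul, ENNReal.toReal_natCast, ENNReal.toReal_ofReal hc,
    ENNReal.toReal_ofNat] at h5
  push_cast [Nat.cast_sub hYN] at h5
  linarith

end ORNBound

open ORNBound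

/-- If an ORN design on `N` nodes guarantees throughput `r` and has
maximum latency at most `L`, and `θ ≥ 2` is an integer with `θ − 1 ≤ L/3` and
`2·binom(L,θ−1) < N`, then `r ≤ (N − 1 + 2·binom(L,θ−1)) / (2θ·(N − 2·binom(L,θ−1)))`. -/
theorem throughput_upper_bound {N T : ℕ} (R : ORNDesign N T) (r : ℝ)
    (hr : GuaranteesThroughput R r) (L : ℕ) (hL : MaxLatencyLE R L)
    (θ : ℕ) (hθ : 2 ≤ θ) (hθL : 3 * (θ - 1) ≤ L)
    (hbinom : 2 * L.choose (θ - 1) < N) :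
    r ≤ ((N : ℝ) - 1 + 2 * L.choose (θ - 1)) /
        (2 * θ * ((N : ℝ) - 2 * L.choose (θ - 1))) := by
  obtain ⟨k, rfl⟩ : ∃ k, θ = k + 1 := ⟨θ - 1, by omega⟩
  simp only [Nat.add_sub_cancel] at *
  have hY := sum_choose_le L k hθL
  have hX := sum_choose_pred_lt L k (by omega) (by omega)
  set B := L.choose k with hB
  have hBpos : 1 ≤ B := Nat.choose_pos (by omega)
  have hN : (2 * B : ℝ) < N := by exact_mod_cast hbinom
  have hB1 : (1 : ℝ) ≤ B := by exact_mod_cast hBpos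
  have hd : (0 : ℝ) < N - 2 * B := by linarith
  have hnum : (0 : ℝ) < N - 1 + 2 * B := by linarith
  have hden : (0 : ℝ) < 2 * (k + 1 : ℕ) * (N - 2 * B) := by positivity
  rcases le_or_gt r 0 with h0 | h0
  · exact h0.trans (div_nonneg hnum.le hden.le)
  set c := r / (N - 1 + 2 * B) with hc
  have hcpos : 0 < c := div_pos h0 hnum
  have hcr : c * (N + (2 * B - 1 : ℕ)) = r := by
    rw [Nat.cast_sub (by omega)]
    push_cast
    rw [hc]
    field_simp
    ring
  have hwin := window_bound R r hr L k hL c hcpos.le (2 * B - 1) (2 * B) (by omega) hY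
    hbinom.le hcr
  set z := ((N : ℝ) - 2 * B) * (c * (2 * (k + 1))) with hz
  have hNpos : (0 : ℝ) < N := by linarith
  have hwin' : ∀ M : ℕ, (M : ℝ) * (z - 1) ≤ L := by
    intro M
    have := hwin M
    push_cast at this
    have h2 : (N : ℝ) * (M * z) ≤ N * (M + L) := by rw [hz]; linarith
    have := le_of_mul_le_mul_left h2 hNpos
    linarith
  have hz1 : z ≤ 1 := by
    by_contra hcon
    obtain ⟨M, hM⟩ := exists_nat_gt ((L : ℝ) / (z - 1))
    have hpos : 0 < z - 1 := by linarith
    rw [div_lt_iff₀ hpos] at hM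
    linarith [hwin' M]
  rw [le_div_iff₀ hden]
  have hrc : r = c * (N - 1 + 2 * B) := by rw [hc]; field_simp
  calc r * (2 * (k + 1 : ℕ) * ((N : ℝ) - 2 * B)) = z * (N - 1 + 2 * B) := by
        rw [hrc, hz]; push_cast; ring
    _ ≤ 1 * (N - 1 + 2 * B) := mul_le_mul_of_nonneg_right hz1 hnum.le
    _ = _ := one_mul _
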